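/- arXiv:2511.18580 — 3 statements merged into one kernel-verified Lean document; each statement's English description precedes it below -/
import Mathlib

section
/- Let S, T, U be finite index sets and consider the mixed-integer set P = {(x, y, z) ∈ ℤ^S × ℝ^T × ℝ^U : A x + B y ≤ d, E x + F z ≤ h, ℓ ≤ y ≤ u, y_i ∈ ℤ for all i ∈ T ∩ I, z_i ∈ ℤ for all i ∈ U ∩ I}, where the matrix A and the vector d have integer entries, the matrix B is totally unimodular, and every finite entry of the bound vectors ℓ and u is an integer (entries of ℓ may be −∞ and entries of u may be +∞). Then for every linear objective w, if the minimum of w over P is attained, it is attained at a point (x, y, z) ∈ P in which every component of y is an integer. In other words, the variables indexed by T are implied integral: integrality of the x-variables together with the constraints implies that an optimal solution with integral y-components always exists. -/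
open Matrix

lemma tu_int_sum {ι : Type*} (s : Finset ι) (f : ι → ℝ) (hf : ∀ i ∈ s, ∃ k : ℤ, f i = k) :
    ∃ k : ℤ, ∑ i ∈ s, f i = k := by
  have : ∑ i ∈ s, f i ∈ (Int.castRingHom ℝ).range := by
    apply Subring.sum_mem
    intro i hi
    obtain ⟨k, hk⟩ := hf i hi
    exact ⟨k, by simp [hk]⟩
  obtain ⟨k, hk⟩ := this
  exact ⟨k, by simp [← hk]⟩

lemma tu_int_mulVec {m n : Type*} [Fintype n] (N : Matrix m n ℝ)
    (hN : ∀ i j, ∃ k : ℤ, N i j = k) (y : n → ℝ) (hy : ∀ i, ∃ k : ℤ, y i = k) (i : m) :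
    ∃ k : ℤ, (N *ᵥ y) i = k := by
  apply tu_int_sum
  intro j _
  obtain ⟨a, ha⟩ := hN i j
  obtain ⟨b, hb⟩ := hy j
  exact ⟨a * b, by simp [ha, hb]⟩

lemma tu_solve {n : Type*} [Fintype n] [DecidableEq n] (N : Matrix n n ℝ)
    (hN : ∀ i j, ∃ k : ℤ, N i j = k) (hdet : N.det = 1 ∨ N.det = -1) (y : n → ℝ)
    (hy : ∀ i, ∃ k : ℤ, (N *ᵥ y) i = k) (i : n) : ∃ k : ℤ, y i = k := by
  choose N' hN' using hN
  have hadj : ∀ i j, ∃ k : ℤ, N.adjugate i j = k := by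
    intro i j
    have h1 : N = (Int.castRingHom ℝ).mapMatrix (Matrix.of N') := by
      ext i j; simp [hN']
    rw [h1, ← RingHom.map_adjugate]
    exact ⟨(Matrix.of N').adjugate i j, by simp⟩
  obtain ⟨k, hk⟩ := tu_int_mulVec N.adjugate hadj _ hy i
  rw [Matrix.mulVec_mulVec, Matrix.adjugate_mul, Matrix.smul_mulVec, Matrix.one_mulVec] at hk
  rcases hdet with h | h
  · exact ⟨k, by simpa [h] using hk⟩
  · refine ⟨-k, ?_⟩
    simp [h] at hk
    push_cast
    linarith

lemma tu_rows {R C : Type*} [Finite R] [Fintype C] (M : Matrix R C ℝ)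
    (hM : ∀ v, M *ᵥ v = 0 → v = 0) :
    ∃ (k : ℕ) (e : Fin k ≃ C) (f : Fin k → R), Function.Injective f ∧
      (M.submatrix f e).det ≠ 0 := by
  classical
  have := Fintype.ofFinite R
  have hr : Module.finrank ℝ (Submodule.span ℝ (Set.range M.row)) = Fintype.card C := by
    rw [← Matrix.rank_eq_finrank_span_row, Matrix.rank, LinearMap.finrank_range_of_inj]
    · simp
    · rw [← LinearMap.ker_eq_bot, LinearMap.ker_eq_bot']
      intro v hv
      exact hM v (by simpa using hv)
  obtain ⟨g, hg, -, hli⟩ := Submodule.exists_fun_fin_finrank_span_eq ℝ (Set.range M.row)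
  choose f hf using hg
  let e : Fin (Module.finrank ℝ (Submodule.span ℝ (Set.range M.row))) ≃ C :=
    (finCongr hr).trans (Fintype.equivFin C).symm
  refine ⟨_, e, f, ?_, ?_⟩
  · intro a b hab
    apply hli.injective
    rw [← hf a, ← hf b, hab]
  · have h2 : LinearIndependent ℝ (M.submatrix f e).row := by
      have h3 := hli.map' (LinearEquiv.funCongrLeft ℝ ℝ e).toLinearMap (LinearEquiv.ker _)
      have h4 : (M.submatrix f e).row =
          (LinearEquiv.funCongrLeft ℝ ℝ e).toLinearMap ∘ g := by
        funext i j
        exact congrFun (hf i) (e j)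
      rw [h4]
      exact h3
    rw [Matrix.linearIndependent_rows_iff_isUnit, Matrix.isUnit_iff_isUnit_det] at h2
    exact h2.ne_zero

/-- Rounding inside an integral box without increasing the objective. -/
lemma tu_round {T M : Type*} [Fintype T] [Fintype M] (B : Matrix M T ℝ) (d : M → ℝ)
    (hd : ∀ i, ∃ k : ℤ, d i = (k : ℝ))
    (hB : ∀ (k : ℕ) (f : Fin k → M) (g : Fin k → T), Function.Injective f →
      Function.Injective g →
      (B.submatrix f g).det = 0 ∨ (B.submatrix f g).det = 1 ∨ (B.submatrix f g).det = -1)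
    (lo hi : T → ℤ) (w : T → ℝ) (y₀ : T → ℝ) (h0 : ∀ m, (B *ᵥ y₀) m ≤ d m)
    (h1 : ∀ i, lo i ≤ y₀ i) (h2 : ∀ i, y₀ i ≤ hi i) :
    ∃ y : T → ℝ, (∀ m, (B *ᵥ y) m ≤ d m) ∧ (∀ i, lo i ≤ y i) ∧ (∀ i, y i ≤ hi i) ∧
      ∑ i, w i * y i ≤ ∑ i, w i * y₀ i ∧ ∀ i, ∃ k : ℤ, y i = k := by
  classical
  have hBint : ∀ i j, ∃ k : ℤ, B i j = k := by
    intro i j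
    have := hB 1 (fun _ => i) (fun _ => j) (Function.injective_of_subsingleton _)
      (Function.injective_of_subsingleton _)
    simp only [Matrix.det_fin_one, Matrix.submatrix_apply] at this
    rcases this with h | h | h
    · exact ⟨0, by simp [h]⟩
    · exact ⟨1, by simp [h]⟩
    · exact ⟨-1, by simp [h]⟩
  let Q : Set (T → ℝ) := {y | (∀ m, (B *ᵥ y) m ≤ d m) ∧ (∀ i, lo i ≤ y i) ∧ ∀ i, y i ≤ hi i}
  have hcont : ∀ m, Continuous fun y : T → ℝ => (B *ᵥ y) m := by
    intro m
    simp only [Matrix.mulVec, dotProduct]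
    fun_prop
  have hQc : IsCompact Q := by
    apply IsCompact.of_isClosed_subset (isCompact_Icc (a := fun i => (lo i : ℝ)) (b := fun i => (hi i : ℝ)))
    · have : Q = (⋂ m, {y | (B *ᵥ y) m ≤ d m}) ∩ ((⋂ i, {y | (lo i : ℝ) ≤ y i}) ∩
          ⋂ i, {y | y i ≤ (hi i : ℝ)}) := by
        ext y; simp [Q]
      rw [this]
      refine (isClosed_iInter fun m => isClosed_le (hcont m) continuous_const).inter
        ((isClosed_iInter fun i => isClosed_le continuous_const (continuous_apply i)).inter
        (isClosed_iInter fun i => isClosed_le (continuous_apply i) continuous_const))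
    · intro y hy
      exact ⟨hy.2.1, hy.2.2⟩
  let L : StrongDual ℝ (T → ℝ) := ∑ i, (-w i) • ContinuousLinearMap.proj (R := ℝ) (φ := fun _ : T => ℝ) i
  have hL : ∀ y, L y = -∑ i, w i * y i := by
    intro y; simp [L]
  have hexp : IsExposed ℝ Q (L.toExposed Q) := ContinuousLinearMap.toExposed.isExposed
  obtain ⟨q, hqQ, hq⟩ := hQc.exists_isMaxOn ⟨y₀, h0, h1, h2⟩ L.continuous.continuousOn
  have hne : (L.toExposed Q).Nonempty := ⟨q, hqQ, fun y hy => hq hy⟩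
  obtain ⟨y, hy⟩ := (hexp.isCompact hQc).extremePoints_nonempty hne
  have hyQ : y ∈ Q.extremePoints ℝ := hexp.isExtreme.extremePoints_subset_extremePoints hy
  have hyw := hy.1.2 y₀ ⟨h0, h1, h2⟩
  rw [hL, hL] at hyw
  refine ⟨y, hyQ.1.1, hyQ.1.2.1, hyQ.1.2.2, by linarith, ?_⟩
  -- integrality of the extreme point
  let C := {i : T // ¬ ∃ k : ℤ, y i = k}
  let R := {m : M // (B *ᵥ y) m = d m}
  have hker : ∀ v : C → ℝ, (B.submatrix (Subtype.val : R → M) (Subtype.val : C → T)) *ᵥ v = 0 →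
      v = 0 := by
    intro v hv
    let V : T → ℝ := fun i => if hi : ¬ ∃ k : ℤ, y i = k then v ⟨i, hi⟩ else 0
    have hBV : ∀ m : R, (B *ᵥ V) m = 0 := by
      intro m
      have := congrFun hv m
      simp only [Matrix.mulVec, dotProduct, Matrix.submatrix_apply, Pi.zero_apply] at this ⊢
      rw [← this, ← Fintype.sum_subtype_add_sum_subtype (fun i : T => ¬ ∃ k : ℤ, y i = k)]
      rw [add_eq_left.2]
      · apply Finset.sum_congr rfl
        intro i _
        simp only [V]
        rw [dif_pos i.2]
        rfl
      · apply Finset.sum_eq_zero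
        intro i _
        simp only [V]
        rw [dif_neg i.2, mul_zero]
    have hev : ∀ᶠ t : ℝ in nhds 0, y + t • V ∈ Q := by
      have hlin : Continuous fun t : ℝ => y + t • V := by fun_prop
      have e1 : ∀ m, ∀ᶠ t : ℝ in nhds 0, (B *ᵥ (y + t • V)) m ≤ d m := by
        intro m
        by_cases hm : (B *ᵥ y) m = d m
        · refine Filter.Eventually.of_forall fun t => ?_
          have := hBV ⟨m, hm⟩
          simp only at this
          rw [Matrix.mulVec_add, Matrix.mulVec_smul]
          simp [this, hm]
        · have hlt : (B *ᵥ y) m < d m := lt_of_le_of_ne (hyQ.1.1 m) hm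
          have : ∀ᶠ t : ℝ in nhds 0, (B *ᵥ (y + t • V)) m < d m :=
            ((hcont m).comp hlin).continuousAt.eventually_lt continuousAt_const (by simpa using hlt)
          exact this.mono fun _ h => h.le
      have e2 : ∀ i, ∀ᶠ t : ℝ in nhds 0, (lo i : ℝ) ≤ (y + t • V) i ∧ (y + t • V) i ≤ hi i := by
        intro i
        by_cases hi' : ∃ k : ℤ, y i = k
        · refine Filter.Eventually.of_forall fun t => ?_
          have hVi : V i = 0 := dif_neg (not_not.2 hi')
          simp only [Pi.add_apply, Pi.smul_apply, hVi, smul_zero, add_zero]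
          exact ⟨hyQ.1.2.1 i, hyQ.1.2.2 i⟩
        · have a1 : (lo i : ℝ) < y i := lt_of_le_of_ne (hyQ.1.2.1 i) fun h => hi' ⟨_, h.symm⟩
          have a2 : y i < (hi i : ℝ) := lt_of_le_of_ne (hyQ.1.2.2 i) fun h => hi' ⟨_, h⟩
          have hci : Continuous fun t : ℝ => (y + t • V) i := (continuous_apply i).comp hlin
          have b1 : ∀ᶠ t : ℝ in nhds 0, (lo i : ℝ) < (y + t • V) i :=
            continuousAt_const.eventually_lt hci.continuousAt (by simpa using a1)
          have b2 : ∀ᶠ t : ℝ in nhds 0, (y + t • V) i < (hi i : ℝ) :=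
            hci.continuousAt.eventually_lt continuousAt_const (by simpa using a2)
          filter_upwards [b1, b2] with t c1 c2 using ⟨c1.le, c2.le⟩
      filter_upwards [Filter.eventually_all.2 e1, Filter.eventually_all.2 e2] with t c1 c2
      exact ⟨c1, fun i => (c2 i).1, fun i => (c2 i).2⟩
    obtain ⟨ε, hε, hball⟩ := Metric.eventually_nhds_iff.1 hev
    have p1 : y + (ε / 2) • V ∈ Q := hball (by simp [abs_of_pos hε]; linarith)
    have p2 : y + (-(ε / 2)) • V ∈ Q := hball (by simp [abs_of_pos hε]; linarith)
    have hseg : y ∈ openSegment ℝ (y + (ε / 2) • V) (y + (-(ε / 2)) • V) := by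
      refine ⟨1 / 2, 1 / 2, by norm_num, by norm_num, by norm_num, ?_⟩
      ext i
      simp
      ring
    have heq := hyQ.2 p1 p2 hseg
    ext i
    have := congrFun heq i.1
    simp only [Pi.add_apply, Pi.smul_apply, smul_eq_mul, add_eq_left, mul_eq_zero] at this
    have hVi : V i.1 = v i := dif_pos i.2
    rw [hVi] at this
    rcases this with h | h
    · linarith
    · simpa using h
  obtain ⟨k, e, f, hf, hdet⟩ := tu_rows _ hker
  have hdet' := hB k (fun i => (f i).1) (fun i => (e i).1) (Subtype.val_injective.comp hf)
    (Subtype.val_injective.comp e.injective)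
  have hdet2 := hdet'.resolve_left hdet
  by_contra! hcon
  obtain ⟨i₀, hi₀⟩ := hcon
  have hsol := tu_solve _ (fun a b => hBint _ _) hdet2 (fun a => y (e a).1) ?_ (e.symm ⟨i₀, by push Not; exact hi₀⟩)
  · obtain ⟨k, hk⟩ := hsol
    simp at hk
    exact hi₀ k hk
  · intro a
    have htight := (f a).2
    obtain ⟨dk, hdk⟩ := hd (f a).1
    simp only [Matrix.mulVec, dotProduct] at htight
    rw [← Fintype.sum_subtype_add_sum_subtype (fun i : T => ¬ ∃ k : ℤ, y i = k)] at htight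
    obtain ⟨r, hr⟩ := tu_int_sum (Finset.univ : Finset {i : T // ¬ ¬ ∃ k : ℤ, y i = k})
      (fun i => B (f a).1 i.1 * y i.1) (by
        intro i _
        obtain ⟨b, hb⟩ := hBint (f a).1 i.1
        obtain ⟨c, hc⟩ := not_not.1 i.2
        exact ⟨b * c, by rw [hb, hc]; push_cast; rfl⟩)
    refine ⟨dk - r, ?_⟩
    simp only [Matrix.mulVec, dotProduct, Matrix.submatrix_apply]
    rw [Equiv.sum_comp e (fun i : C => B (f a).1 i.1 * y i.1)]
    push_cast
    rw [← hdk, ← hr, ← htight]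
    ring

/-- **Implied integrality via totally unimodular submatrices (TU detection).**
Consider the mixed-integer set
`P = {(x, y, z) : A x + B y ≤ d, E x + F z ≤ h, ℓ ≤ y ≤ u, x integral,
      y_i integral for i ∈ TI, z_i integral for i ∈ UI}`
where `A` and `d` are integral, `B` is totally unimodular and every finite entry of
`ℓ` and `u` is an integer.  Then for every linear objective, if the minimum over `P`
is attained, it is attained at a point whose `y`-components are all integral. -/
theorem stmt0
    {S T U M₁ M₂ : Type*} [Fintype S] [Fintype T] [Fintype U] [Fintype M₁] [Fintype M₂]
    (A : Matrix M₁ S ℝ) (B : Matrix M₁ T ℝ) (d : M₁ → ℝ)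
    (E : Matrix M₂ S ℝ) (F : Matrix M₂ U ℝ) (h : M₂ → ℝ)
    (ℓ u : T → EReal)
    (TI : Set T) (UI : Set U)
    -- `A` and `d` have integer entries
    (hA : ∀ i j, ∃ k : ℤ, A i j = (k : ℝ)) (hd : ∀ i, ∃ k : ℤ, d i = (k : ℝ))
    -- `B` is totally unimodular: every square submatrix has determinant 0, 1 or -1
    (hB : ∀ (k : ℕ) (f : Fin k → M₁) (g : Fin k → T), Function.Injective f →
      Function.Injective g →
      (B.submatrix f g).det = 0 ∨ (B.submatrix f g).det = 1 ∨ (B.submatrix f g).det = -1)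
    -- every finite entry of `ℓ` and `u` is an integer
    (hl : ∀ i, ℓ i = ⊥ ∨ ∃ k : ℤ, ℓ i = ((k : ℝ) : EReal))
    (hu : ∀ i, u i = ⊤ ∨ ∃ k : ℤ, u i = ((k : ℝ) : EReal))
    -- the mixed-integer set `P`
    (P : Set ((S → ℝ) × (T → ℝ) × (U → ℝ)))
    (hP : P = {p | (∀ i, ∃ k : ℤ, p.1 i = (k : ℝ)) ∧
      (∀ m, (A *ᵥ p.1) m + (B *ᵥ p.2.1) m ≤ d m) ∧
      (∀ m, (E *ᵥ p.1) m + (F *ᵥ p.2.2) m ≤ h m) ∧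
      (∀ i, ℓ i ≤ ((p.2.1 i : ℝ) : EReal) ∧ ((p.2.1 i : ℝ) : EReal) ≤ u i) ∧
      (∀ i ∈ TI, ∃ k : ℤ, p.2.1 i = (k : ℝ)) ∧
      (∀ i ∈ UI, ∃ k : ℤ, p.2.2 i = (k : ℝ))})
    -- an arbitrary linear objective
    (wS : S → ℝ) (wT : T → ℝ) (wU : U → ℝ)
    (obj : (S → ℝ) × (T → ℝ) × (U → ℝ) → ℝ)
    (hobj : obj = fun p => ∑ i, wS i * p.1 i + ∑ i, wT i * p.2.1 i + ∑ i, wU i * p.2.2 i)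
    -- the minimum over `P` is attained at `p₀`
    (p₀ : (S → ℝ) × (T → ℝ) × (U → ℝ)) (hp₀ : p₀ ∈ P)
    (hmin : ∀ p ∈ P, obj p₀ ≤ obj p) :
    -- then it is attained at a point all of whose `y`-components are integral
    ∃ p ∈ P, obj p = obj p₀ ∧ ∀ i : T, ∃ k : ℤ, p.2.1 i = (k : ℝ) := by
  classical
  obtain ⟨x, y, z⟩ := p₀
  subst hP hobj
  obtain ⟨hx, hAB, hEF, hb, hTI, hUI⟩ := hp₀
  simp only at hx hAB hEF hb hTI hUI
  obtain ⟨y', g1, g2, g3, g4, g5⟩ := tu_round B (fun m => d m - (A *ᵥ x) m) (by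
      intro m
      obtain ⟨a, ha⟩ := hd m
      obtain ⟨b, hb⟩ := tu_int_mulVec A hA x hx m
      exact ⟨a - b, by rw [ha, hb]; push_cast; rfl⟩) hB (fun i => ⌊y i⌋) (fun i => ⌈y i⌉) wT y
    (fun m => by linarith [hAB m]) (fun i => Int.floor_le _) (fun i => Int.le_ceil _)
  have hmem : (x, y', z) ∈ {p : (S → ℝ) × (T → ℝ) × (U → ℝ) | (∀ i, ∃ k : ℤ, p.1 i = (k : ℝ)) ∧
      (∀ m, (A *ᵥ p.1) m + (B *ᵥ p.2.1) m ≤ d m) ∧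
      (∀ m, (E *ᵥ p.1) m + (F *ᵥ p.2.2) m ≤ h m) ∧
      (∀ i, ℓ i ≤ ((p.2.1 i : ℝ) : EReal) ∧ ((p.2.1 i : ℝ) : EReal) ≤ u i) ∧
      (∀ i ∈ TI, ∃ k : ℤ, p.2.1 i = (k : ℝ)) ∧
      (∀ i ∈ UI, ∃ k : ℤ, p.2.2 i = (k : ℝ))} := by
    refine ⟨hx, fun m => by have := g1 m; simp only; linarith, hEF, fun i => ⟨?_, ?_⟩,
      fun i _ => g5 i, hUI⟩
    · rcases hl i with h | ⟨k, hk⟩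
      · simp [h]
      · have h1 := (hb i).1
        rw [hk, EReal.coe_le_coe_iff] at h1
        rw [hk, EReal.coe_le_coe_iff]
        have h2 : k ≤ ⌊y i⌋ := Int.le_floor.2 h1
        exact le_trans (by exact_mod_cast h2) (g2 i)
    · rcases hu i with h | ⟨k, hk⟩
      · simp [h]
      · have h1 := (hb i).2
        rw [hk, EReal.coe_le_coe_iff] at h1
        rw [hk, EReal.coe_le_coe_iff]
        have h2 : ⌈y i⌉ ≤ k := Int.ceil_le.2 h1
        exact le_trans (g3 i) (by exact_mod_cast h2)
  refine ⟨_, hmem, ?_, g5⟩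
  have := hmin _ hmem
  simp only at this ⊢
  linarith
end

section
/- Let G = (V, E) be a finite hypergraph, let x ∈ {0,1}^V and z ∈ {0,1}^E satisfy z_e = ∏_{v ∈ e} x_v for every hyperedge e ∈ E. Let e ∈ E be a center edge, let k ≥ 1, and let f_1, f_2, …, f_k ∈ E be neighbor edges each satisfying f_i ∩ e ≠ ∅, and set R = e \ (f_1 ∪ ⋯ ∪ f_k). Then the k-flower inequality holds: z_e + Σ_{i=1}^{k} (1 − z_{f_i}) + Σ_{v ∈ R} (1 − x_v) ≥ 1. -/
/-- **Validity of k-flower inequalities.**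
Let `G = (V, E)` be a finite hypergraph with binary node variables `x : V → {0,1}`
and, for each hyperedge `e`, binary resultant variable `z e = ∏_{v ∈ e} x v`.
For a center edge `e`, neighbor edges `f 1, …, f k` each intersecting `e`, and
`R = e \ (f 1 ∪ ⋯ ∪ f k)`, the `k`-flower inequality
`z e + Σᵢ (1 − z (f i)) + Σ_{v ∈ R} (1 − x v) ≥ 1` holds. -/
theorem stmt1 {V : Type*} [DecidableEq V] (x : V → ℝ)
    (hx : ∀ v, x v = 0 ∨ x v = 1)
    (z : Finset V → ℝ)
    (hz : ∀ e : Finset V, z e = ∏ v ∈ e, x v)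
    (k : ℕ) (hk : 1 ≤ k)
    (e : Finset V) (f : Fin k → Finset V)
    (hf : ∀ i, (f i ∩ e).Nonempty)
    (R : Finset V) (hR : R = e \ Finset.univ.biUnion f) :
    1 ≤ z e + (∑ i, (1 - z (f i))) + ∑ v ∈ R, (1 - x v) := by
  have x0 : ∀ v, 0 ≤ x v := fun v => by rcases hx v with h | h <;> simp [h]
  have x1 : ∀ v, x v ≤ 1 := fun v => by rcases hx v with h | h <;> simp [h]
  have z0 : ∀ s, 0 ≤ z s := fun s => by
    rw [hz]; exact Finset.prod_nonneg fun v _ => x0 v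
  have z1 : ∀ s, z s ≤ 1 := fun s => by
    rw [hz]; exact Finset.prod_le_one (fun v _ => x0 v) fun v _ => x1 v
  have hS : ∀ i ∈ (Finset.univ : Finset (Fin k)), 0 ≤ 1 - z (f i) :=
    fun i _ => sub_nonneg.2 (z1 _)
  have hT : ∀ v ∈ R, 0 ≤ 1 - x v := fun v _ => sub_nonneg.2 (x1 v)
  have hS0 := Finset.sum_nonneg hS
  have hT0 := Finset.sum_nonneg hT
  have he0 := z0 e
  by_cases h : ∃ v ∈ e, x v = 0
  · obtain ⟨v, hv, hv0⟩ := h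
    by_cases hvf : ∃ i, v ∈ f i
    · obtain ⟨i, hi⟩ := hvf
      have h1 := Finset.single_le_sum hS (Finset.mem_univ i)
      have h2 : z (f i) = 0 := by rw [hz]; exact Finset.prod_eq_zero hi hv0
      linarith
    · have hvR : v ∈ R := by
        rw [hR]; simp only [Finset.mem_sdiff, Finset.mem_biUnion, Finset.mem_univ, true_and]
        exact ⟨hv, hvf⟩
      have h1 := Finset.single_le_sum hT hvR
      linarith
  · have h1 : z e = 1 := by
      rw [hz]
      exact Finset.prod_eq_one fun v hv => (hx v).resolve_left fun h0 => h ⟨v, hv, h0⟩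
    linarith
end

section
/- Let Γ be a finite group of signed permutations of ℝ^n, i.e., each γ ∈ Γ acts by γ(x) = (s^γ_1 x_{π_γ^{-1}(1)}, …, s^γ_n x_{π_γ^{-1}(n)}) for some permutation π_γ of [n] and sign vector s^γ ∈ {−1,1}^n, let F ⊆ ℝ^n satisfy γ(F) = F for all γ ∈ Γ, and let f : ℝ^n → ℝ satisfy f(γ(x)) = f(x) for all x ∈ F and γ ∈ Γ. Fix an index i ∈ [n]. If the minimum of f over F is attained, then it is attained at a point x ∈ F satisfying the SST cuts x_i ≥ γ(x)_i for every γ ∈ Γ. -/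
/-- **Validity of SST cuts for groups of reflection (signed permutation) symmetries.**
Let `Γ` be a finite group (under composition) of signed permutations of `ℝⁿ` leaving
the feasible set `F` and the objective `f` invariant, and fix an index `i`.  If the
minimum of `f` over `F` is attained, then it is attained at a point `x ∈ F`
satisfying the SST cuts `x i ≥ (γ x) i` for every `γ ∈ Γ`. -/
theorem stmt4 {n : ℕ} (Γ : Set ((Fin n → ℝ) → (Fin n → ℝ)))
    (hfin : Γ.Finite)
    -- every element of Γ is a signed permutation
    (hsigned : ∀ γ ∈ Γ, ∃ (π : Equiv.Perm (Fin n)) (sg : Fin n → ℝ),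
      (∀ j, sg j = 1 ∨ sg j = -1) ∧ ∀ (x : Fin n → ℝ) (j : Fin n),
        γ x j = sg j * x (π.symm j))
    -- Γ is a group under composition
    (hid : id ∈ Γ)
    (hcomp : ∀ γ₁ ∈ Γ, ∀ γ₂ ∈ Γ, γ₁ ∘ γ₂ ∈ Γ)
    (hinv : ∀ γ ∈ Γ, ∃ γ' ∈ Γ, γ ∘ γ' = id ∧ γ' ∘ γ = id)
    (F : Set (Fin n → ℝ))
    (hF : ∀ γ ∈ Γ, γ '' F = F)
    (f : (Fin n → ℝ) → ℝ)
    (hf : ∀ x ∈ F, ∀ γ ∈ Γ, f (γ x) = f x)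
    (i : Fin n)
    -- the minimum of `f` over `F` is attained at `x₀`
    (x₀ : Fin n → ℝ) (hx₀ : x₀ ∈ F) (hmin : ∀ x ∈ F, f x₀ ≤ f x) :
    ∃ x ∈ F, f x = f x₀ ∧ ∀ γ ∈ Γ, γ x i ≤ x i := by
  obtain ⟨g, hg, hmax⟩ := Set.exists_max_image Γ (fun γ => γ x₀ i) hfin ⟨id, hid⟩
  refine ⟨g x₀, ?_, hf x₀ hx₀ g hg, fun γ hγ => hmax (γ ∘ g) (hcomp γ hγ g hg)⟩
  rw [← hF g hg]
  exact ⟨x₀, hx₀, rfl⟩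
end
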